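/- arXiv:2108.12312 — 2 statements merged into one kernel-verified Lean document; each statement's English description precedes it below -/
import Mathlib

section
/- Let p, q ∈ R be idempotents. Then (1-p) - q is group invertible if and only if q1 and (1-p) - q4 are group invertible and the following hold: ((1-p)-q4)^# * q3 = q3 * q1^#, q3 * q1^π = 0, ((1-p)-q4)^π * q3 = 0, q2 * ((1-p)-q4)^# = q1^# * q2, q1^π * q2 = 0, q2 * ((1-p)-q4)^π = 0. In this case ((1-p) - q)^# = -q1^#*q1 - q1^#*q2 - ((1-p)-q4)^#*q3 + ((1-p)-q4)^#*((1-p)-q4). -/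
/-!
Write `a = (1 - p) - q`. Its square commutes with `p` and is block diagonal,
`p * a ^ 2 = q1` and `(1 - p) * a ^ 2 = (1 - p) - q4`. An element `a` is group invertible exactly
when `a ^ 2` is and `(a ^ 2)^π * a = 0`, and then `a^# = (a ^ 2)^# * a`. Since
`p * a = -(q1 + q2)` and `(1 - p) * a = ((1 - p) - q4) - q3`, reading these facts block by block
gives the formula and the two conditions `q1^π * q2 = 0` and `((1 - p) - q4)^π * q3 = 0`.
The other four conditions follow, because `q3` intertwines `q1` with `(1 - p) - q4`, `q2`
intertwines them in the opposite direction, and intertwiners pass to group inverses.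
-/

variable {R : Type*} [Ring R]

/-- `c` is a group inverse of `a`. -/
def IsGroupInvOf (a c : R) : Prop := a * c * a = a ∧ c * a * c = c ∧ a * c = c * a

/-- `a` is group invertible. -/
def GroupInvertible (a : R) : Prop := ∃ c, IsGroupInvOf a c

/-- The group inverse `a^#` (junk value `0` if it does not exist). -/
noncomputable def gi (a : R) : R :=
  haveI := Classical.dec (GroupInvertible a)
  if h : GroupInvertible a then h.choose else 0

/-- The spectral idempotent `a^π = 1 - a * a^#`. -/
noncomputable def sp (a : R) : R := 1 - a * gi a

namespace IsGroupInvOf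

variable {a b c d e x : R}

lemma commute (h : IsGroupInvOf a c) : Commute a c := h.2.2

lemma semiconjBy_mul (hac : IsGroupInvOf a c) (hbd : IsGroupInvOf b d) (hx : SemiconjBy x a b) :
    SemiconjBy x (a * c) (b * d) := by
  obtain ⟨haca, -, hcomm_ac⟩ := hac
  obtain ⟨hbdb, -, hcomm_bd⟩ := hbd
  have left : x * (a * c) = b * d * x * (a * c) := by
    calc x * (a * c) = b * d * b * x * c := by rw [← mul_assoc, hx.eq, hbdb]
      _ = b * d * x * (a * c) := by simp only [mul_assoc, ← hx.eq]
  have right : b * d * x = b * d * x * (a * c) := by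
    calc b * d * x = d * (x * (a * c * a)) := by rw [haca, hx.eq, hcomm_bd, mul_assoc]
      _ = d * (x * a) * (a * c) := by rw [mul_assoc a c, ← hcomm_ac]; simp only [mul_assoc]
      _ = b * d * x * (a * c) := by rw [hx.eq, hcomm_bd]; simp only [mul_assoc]
  exact left.trans right.symm

lemma semiconjBy (hac : IsGroupInvOf a c) (hbd : IsGroupInvOf b d) (hx : SemiconjBy x a b) :
    SemiconjBy x c d := by
  have hidem : x * (a * c) = b * d * x := hac.semiconjBy_mul hbd hx
  calc x * c = x * (a * c) * c := by rw [mul_assoc, hac.2.2, hac.2.1]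
    _ = d * (b * x) * c := by rw [hidem, hbd.2.2, mul_assoc d]
    _ = d * (x * (a * c)) := by rw [← hx.eq]; simp only [mul_assoc]
    _ = d * x := by rw [hidem, ← mul_assoc, ← mul_assoc, hbd.2.1]

lemma unique (hc : IsGroupInvOf a c) (hd : IsGroupInvOf a d) : c = d := by
  simpa [SemiconjBy] using hc.semiconjBy hd (SemiconjBy.one_left a)

lemma commute_of_commute (h : IsGroupInvOf a c) (hx : Commute x a) : Commute x c :=
  h.semiconjBy h hx

lemma of_isIdempotentElem (he : IsIdempotentElem e) : IsGroupInvOf e e :=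
  ⟨by rw [he.eq, he.eq], by rw [he.eq, he.eq], rfl⟩

lemma mul (hac : IsGroupInvOf a c) (hbd : IsGroupInvOf b d) (hab : Commute a b) :
    IsGroupInvOf (a * b) (c * d) := by
  have had : Commute a d := hbd.commute_of_commute hab
  have hbc : Commute b c := hac.commute_of_commute hab.symm
  have hcd : Commute c d := hbd.commute_of_commute hbc.symm
  have habcd : a * b * (c * d) = a * c * (b * d) := hbc.mul_mul_mul_comm a d
  have hcdab : c * d * (a * b) = c * a * (d * b) := had.symm.mul_mul_mul_comm c b
  refine ⟨?_, ?_, ?_⟩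
  · rw [habcd, (hab.symm.mul_left had.symm).mul_mul_mul_comm, hac.1, hbd.1]
  · rw [hcdab, (hcd.symm.mul_left hbc).mul_mul_mul_comm, hac.2.1, hbd.2.1]
  · rw [habcd, hcdab, hac.2.2, hbd.2.2]

lemma zero : IsGroupInvOf (0 : R) 0 := of_isIdempotentElem .zero

lemma mul_right_eq_zero (h : IsGroupInvOf a c) (hx : x * a = 0) : x * c = 0 := by
  simpa [SemiconjBy] using h.semiconjBy zero (x := x) (by simp [SemiconjBy, hx])

lemma mul_left_eq_zero (h : IsGroupInvOf a c) (hx : a * x = 0) : c * x = 0 := by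
  simpa [SemiconjBy, eq_comm] using zero.semiconjBy h (x := x) (by simp [SemiconjBy, hx])

lemma add (hac : IsGroupInvOf a c) (hbd : IsGroupInvOf b d) (hab : a * b = 0) (hba : b * a = 0) :
    IsGroupInvOf (a + b) (c + d) := by
  have had : a * d = 0 := hbd.mul_right_eq_zero hab
  have hda : d * a = 0 := hbd.mul_left_eq_zero hba
  have hbc : b * c = 0 := hac.mul_right_eq_zero hba
  have hcb : c * b = 0 := hac.mul_left_eq_zero hab
  have hright : (a + b) * (c + d) = a * c + b * d := by simp [add_mul, mul_add, had, hbc]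
  have hleft : (c + d) * (a + b) = c * a + d * b := by simp [add_mul, mul_add, hda, hcb]
  refine ⟨?_, ?_, ?_⟩
  · rw [hright, add_mul, mul_add, mul_add, hac.1, hbd.1, mul_assoc a, hcb, mul_assoc b, hda]
    simp
  · rw [hleft, add_mul, mul_add, mul_add, hac.2.1, hbd.2.1, mul_assoc c, had, mul_assoc d, hbc]
    simp
  · rw [hright, hleft, hac.2.2, hbd.2.2]

lemma of_mul_self (h : IsGroupInvOf (a * a) d) (ha : a * a * d * a = a) :
    IsGroupInvOf a (d * a) := by
  have had : a * d = d * a := h.commute_of_commute ((Commute.refl a).mul_right (.refl a))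
  have hda : a * (d * a) = a * a * d := by rw [← had, mul_assoc]
  refine ⟨by rw [hda, ha], ?_, by rw [← mul_assoc, had]⟩
  calc d * a * a * (d * a) = d * (a * a) * d * a := by simp only [mul_assoc]
    _ = d * a := by rw [h.2.1]

end IsGroupInvOf

lemma IsGroupInvOf.gi_eq {a c : R} (h : IsGroupInvOf a c) : gi a = c := by
  have hex : GroupInvertible a := ⟨c, h⟩
  rw [gi, dif_pos hex]
  exact hex.choose_spec.unique h

namespace GroupInvertible

variable {a b x : R}

lemma isGroupInvOf_gi (h : GroupInvertible a) : IsGroupInvOf a (gi a) := by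
  obtain ⟨c, hc⟩ := h
  rwa [hc.gi_eq]

lemma sp_mul (h : GroupInvertible a) : sp a * a = 0 := by
  rw [sp, sub_mul, one_mul, h.isGroupInvOf_gi.1, sub_self]

lemma semiconjBy_gi (ha : GroupInvertible a) (hb : GroupInvertible b) (hx : SemiconjBy x a b) :
    SemiconjBy x (gi a) (gi b) :=
  ha.isGroupInvOf_gi.semiconjBy hb.isGroupInvOf_gi hx

lemma semiconjBy_sp (ha : GroupInvertible a) (hb : GroupInvertible b) (hx : SemiconjBy x a b) :
    SemiconjBy x (sp a) (sp b) :=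
  (SemiconjBy.one_right x).sub_right (hx.mul_right (ha.semiconjBy_gi hb hx))

lemma mul_self (h : GroupInvertible a) : GroupInvertible (a * a) :=
  ⟨_, h.isGroupInvOf_gi.mul h.isGroupInvOf_gi (.refl a)⟩

lemma sp_mul_self (h : GroupInvertible a) : sp (a * a) = sp a := by
  have hc := h.isGroupInvOf_gi
  rw [sp, (hc.mul hc (.refl a)).gi_eq, hc.commute.mul_mul_mul_comm, ← mul_assoc, hc.1, sp]

end GroupInvertible

lemma isGroupInvOf_gi_mul_self_mul {a : R} (h : GroupInvertible (a * a))
    (ha : sp (a * a) * a = 0) : IsGroupInvOf a (gi (a * a) * a) := by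
  refine h.isGroupInvOf_gi.of_mul_self ?_
  rwa [sp, sub_mul, one_mul, sub_eq_zero, eq_comm] at ha

lemma groupInvertible_iff_mul_self {a : R} :
    GroupInvertible a ↔ GroupInvertible (a * a) ∧ sp (a * a) * a = 0 :=
  ⟨fun h => ⟨h.mul_self, by rw [h.sp_mul_self, h.sp_mul]⟩,
    fun h => ⟨_, isGroupInvOf_gi_mul_self_mul h.1 h.2⟩⟩

lemma GroupInvertible.gi_eq_gi_mul_self_mul {a : R} (h : GroupInvertible a) :
    gi a = gi (a * a) * a :=
  let ⟨hsq, hsp⟩ := groupInvertible_iff_mul_self.1 h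
  (isGroupInvOf_gi_mul_self_mul hsq hsp).gi_eq

section Corners

variable {a e : R}

lemma GroupInvertible.isGroupInvOf_corner (h : GroupInvertible a) (he : IsIdempotentElem e)
    (hea : Commute e a) : IsGroupInvOf (e * a) (e * gi a) :=
  (IsGroupInvOf.of_isIdempotentElem he).mul h.isGroupInvOf_gi hea

lemma GroupInvertible.gi_corner_mul (h : GroupInvertible a) (he : IsIdempotentElem e)
    (hea : Commute e a) (x : R) : gi (e * a) * (e * x) = e * (gi a * x) := by
  have hegi : Commute e (gi a) := h.semiconjBy_gi h hea
  rw [(h.isGroupInvOf_corner he hea).gi_eq, hegi.symm.mul_mul_mul_comm, he.eq]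

lemma GroupInvertible.sp_corner_mul (h : GroupInvertible a) (he : IsIdempotentElem e)
    (hea : Commute e a) (x : R) : sp (e * a) * (e * x) = e * (sp a * x) := by
  calc sp (e * a) * (e * x) = e * x - e * a * (gi (e * a) * (e * x)) := by
        rw [sp, sub_mul, one_mul, mul_assoc (e * a)]
    _ = e * x - e * (a * (gi a * x)) := by
        rw [h.gi_corner_mul he hea, hea.symm.mul_mul_mul_comm, he.eq]
    _ = e * (sp a * x) := by rw [sp, sub_mul, one_mul, mul_sub, mul_assoc a]

lemma groupInvertible_iff_corners (he : IsIdempotentElem e) (hea : Commute e a) :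
    GroupInvertible a ↔ GroupInvertible (e * a) ∧ GroupInvertible ((1 - e) * a) := by
  have hea' : Commute (1 - e) a := (Commute.one_left a).sub_left hea
  constructor
  · exact fun h => ⟨⟨_, h.isGroupInvOf_corner he hea⟩, ⟨_, h.isGroupInvOf_corner he.one_sub hea'⟩⟩
  · rintro ⟨⟨c, hc⟩, ⟨d, hd⟩⟩
    have hleft : e * a * ((1 - e) * a) = 0 := by
      rw [hea'.symm.mul_mul_mul_comm, he.mul_one_sub_self, zero_mul]
    have hright : (1 - e) * a * (e * a) = 0 := by
      rw [hea.symm.mul_mul_mul_comm, he.one_sub_mul_self, zero_mul]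
    have hsum : e * a + (1 - e) * a = a := by rw [← add_mul, add_sub_cancel, one_mul]
    exact ⟨c + d, hsum ▸ hc.add hd hleft hright⟩

lemma groupInvertible_iff_mul_self_corners (he : IsIdempotentElem e) (hea : Commute e (a * a)) :
    GroupInvertible a ↔
      (GroupInvertible (e * (a * a)) ∧ GroupInvertible ((1 - e) * (a * a))) ∧
        sp (e * (a * a)) * (e * a) = 0 ∧ sp ((1 - e) * (a * a)) * ((1 - e) * a) = 0 := by
  have hea' : Commute (1 - e) (a * a) := (Commute.one_left _).sub_left hea
  rw [groupInvertible_iff_mul_self, ← groupInvertible_iff_corners he hea]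
  refine and_congr_right fun h => ?_
  rw [h.sp_corner_mul he hea, h.sp_corner_mul he.one_sub hea']
  constructor
  · intro h0
    simp only [h0, mul_zero, and_self]
  · rintro ⟨h0, h1⟩
    rw [← one_mul (sp (a * a) * a), ← add_sub_cancel e 1, add_mul, h0, h1, add_zero]

lemma GroupInvertible.gi_eq_add_corners (h : GroupInvertible a) (he : IsIdempotentElem e)
    (hea : Commute e (a * a)) :
    gi a = gi (e * (a * a)) * (e * a) + gi ((1 - e) * (a * a)) * ((1 - e) * a) := by
  have hea' : Commute (1 - e) (a * a) := (Commute.one_left _).sub_left hea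
  rw [h.mul_self.gi_corner_mul he hea, h.mul_self.gi_corner_mul he.one_sub hea', ← add_mul,
    add_sub_cancel, one_mul, h.gi_eq_gi_mul_self_mul]

end Corners

section Idempotents

variable {p q : R}

lemma mul_one_sub_sub (hp : IsIdempotentElem p) :
    p * (1 - p - q) = -(p * q * p + p * q * (1 - p)) := by
  linear_combination (norm := noncomm_ring) -hp.eq

lemma one_sub_mul_one_sub_sub (hp : IsIdempotentElem p) :
    (1 - p) * (1 - p - q) = 1 - p - (1 - p) * q * (1 - p) - (1 - p) * q * p := by
  linear_combination (norm := noncomm_ring) hp.eq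

lemma mul_one_sub_sub_mul_self (hp : IsIdempotentElem p) (hq : IsIdempotentElem q) :
    p * ((1 - p - q) * (1 - p - q)) = p * q * p := by
  linear_combination (norm := noncomm_ring) -(hp.eq * (1 - p - q)) + p * hq.eq

lemma one_sub_mul_one_sub_sub_mul_self (hp : IsIdempotentElem p) (hq : IsIdempotentElem q) :
    (1 - p) * ((1 - p - q) * (1 - p - q)) = 1 - p - (1 - p) * q * (1 - p) := by
  linear_combination (norm := noncomm_ring) hp.eq * (1 - p - q) + hp.eq + (1 - p) * hq.eq

lemma commute_one_sub_sub_mul_self (hp : IsIdempotentElem p) (hq : IsIdempotentElem q) :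
    Commute p ((1 - p - q) * (1 - p - q)) := by
  rw [commute_iff_eq, mul_one_sub_sub_mul_self hp hq]
  linear_combination (norm := noncomm_ring) (1 - p - q) * hp.eq - hq.eq * p

lemma semiconjBy_one_sub_mul_mul (hp : IsIdempotentElem p) (hq : IsIdempotentElem q) :
    SemiconjBy ((1 - p) * q * p) (p * q * p) (1 - p - (1 - p) * q * (1 - p)) := by
  rw [SemiconjBy]
  linear_combination (norm := noncomm_ring)
    2 * (1 - p) * q * hp.eq * q * p - hp.eq * q * p + (1 - p) * hq.eq * p

lemma semiconjBy_mul_mul_one_sub (hp : IsIdempotentElem p) (hq : IsIdempotentElem q) :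
    SemiconjBy (p * q * (1 - p)) (1 - p - (1 - p) * q * (1 - p)) (p * q * p) := by
  rw [SemiconjBy]
  linear_combination (norm := noncomm_ring)
    p * q * hp.eq - p * hq.eq * (1 - p) - 2 * p * q * hp.eq * q * (1 - p)

lemma groupInvertible_one_sub_sub_iff (hp : IsIdempotentElem p) (hq : IsIdempotentElem q) :
    GroupInvertible (1 - p - q) ↔
      (GroupInvertible (p * q * p) ∧ GroupInvertible (1 - p - (1 - p) * q * (1 - p))) ∧
        sp (p * q * p) * (p * q * (1 - p)) = 0 ∧
        sp (1 - p - (1 - p) * q * (1 - p)) * ((1 - p) * q * p) = 0 := by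
  rw [groupInvertible_iff_mul_self_corners hp (commute_one_sub_sub_mul_self hp hq),
    mul_one_sub_sub_mul_self hp hq, one_sub_mul_one_sub_sub_mul_self hp hq, mul_one_sub_sub hp,
    one_sub_mul_one_sub_sub hp]
  refine and_congr_right fun ⟨h1, h4⟩ => ?_
  rw [mul_neg, mul_add, h1.sp_mul, zero_add, neg_eq_zero, mul_sub (sp _), h4.sp_mul,
    zero_sub, neg_eq_zero]

lemma gi_one_sub_sub (hp : IsIdempotentElem p) (hq : IsIdempotentElem q)
    (h : GroupInvertible (1 - p - q)) :
    gi (1 - p - q) =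
      gi (p * q * p) * -(p * q * p + p * q * (1 - p)) +
        gi (1 - p - (1 - p) * q * (1 - p)) *
          (1 - p - (1 - p) * q * (1 - p) - (1 - p) * q * p) := by
  rw [h.gi_eq_add_corners hp (commute_one_sub_sub_mul_self hp hq),
    mul_one_sub_sub_mul_self hp hq, one_sub_mul_one_sub_sub_mul_self hp hq, mul_one_sub_sub hp,
    one_sub_mul_one_sub_sub hp]

end Idempotents

theorem group_inv_pbar_sub_q (p q q1 q2 q3 q4 : R) (hp : p * p = p) (hq : q * q = q)
    (h1 : q1 = p * q * p) (h2 : q2 = p * q * (1 - p))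
    (h3 : q3 = (1 - p) * q * p) (h4 : q4 = (1 - p) * q * (1 - p)) :
    (GroupInvertible ((1 - p) - q) ↔
      GroupInvertible q1 ∧ GroupInvertible ((1 - p) - q4) ∧
        gi ((1 - p) - q4) * q3 = q3 * gi q1 ∧ q3 * sp q1 = 0 ∧ sp ((1 - p) - q4) * q3 = 0 ∧
        q2 * gi ((1 - p) - q4) = gi q1 * q2 ∧ sp q1 * q2 = 0 ∧ q2 * sp ((1 - p) - q4) = 0) ∧
    (GroupInvertible ((1 - p) - q) →
      gi ((1 - p) - q) =
        -(gi q1 * q1) - gi q1 * q2 - gi ((1 - p) - q4) * q3 +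
          gi ((1 - p) - q4) * ((1 - p) - q4)) := by
  subst h1 h2 h3 h4
  have hq3 := semiconjBy_one_sub_mul_mul hp hq
  have hq2 := semiconjBy_mul_mul_one_sub hp hq
  refine ⟨(groupInvertible_one_sub_sub_iff hp hq).trans ⟨?_, ?_⟩, fun h => ?_⟩
  · rintro ⟨⟨g1, g4⟩, hsp2, hsp3⟩
    exact ⟨g1, g4, (g1.semiconjBy_gi g4 hq3).symm, (g1.semiconjBy_sp g4 hq3).trans hsp3, hsp3,
      g4.semiconjBy_gi g1 hq2, hsp2, (g4.semiconjBy_sp g1 hq2).trans hsp2⟩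
  · rintro ⟨g1, g4, -, -, hsp3, -, hsp2, -⟩
    exact ⟨⟨g1, g4⟩, hsp2, hsp3⟩
  · rw [gi_one_sub_sub hp hq h]
    noncomm_ring
end

section
/- Let p, q ∈ R be idempotents. Then (1-p)*(1-q) is group invertible if and only if (1-p) - q4 is group invertible and ((1-p)-q4)^π * q3 = 0. -/
variable {R : Type*} [Ring R]

/-!
Put `e = 1 - p` and `x = (1 - p) * (1 - q)`, so that `e * x = x`. Relative to `1 = e + p`, the
element `x` is upper triangular with zero second row: its corner is `b = x * e = (1 - p) - q4` and
its off-diagonal entry is `x * p = -q3`. A group inverse `y` of `x` restricts to the group inverse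
`y * e` of `b` and exhibits `x = b * (y * x)` as an element of `b * R`; conversely, if `c` is the
group inverse of `b` and `x` lies in `b * R`, then `c * c * x` is the group inverse of `x`. Finally
`b^π` is the idempotent whose right annihilator is `b * R`, and `x = b - q3`, so `x` lies in `b * R`
exactly when `b^π * q3 = 0`.
-/

section GroupInverse

variable {a c e x y : R}

theorem IsGroupInvOf.mul_eq_of_mul_eq (h : IsGroupInvOf a c) (hea : e * a = a) : e * c = c := by
  obtain ⟨-, hcac, hcomm⟩ := h
  have hc : c = a * (c * c) := by rw [← mul_assoc, hcomm, hcac]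
  rw [hc, ← mul_assoc, hea]

theorem IsGroupInvOf.mul_mul_eq_of_dvd (h : IsGroupInvOf a c) (hax : a ∣ x) : a * c * x = x := by
  obtain ⟨t, rfl⟩ := hax
  rw [← mul_assoc, h.1]

theorem GroupInvertible.isGroupInvOf_gi_s11 (h : GroupInvertible a) : IsGroupInvOf a (gi a) := by
  rw [gi, dif_pos h]
  exact h.choose_spec

theorem GroupInvertible.sp_mul_eq_zero_iff_dvd (h : GroupInvertible a) :
    sp a * x = 0 ↔ a ∣ x := by
  rw [sp, sub_mul, one_mul, sub_eq_zero]
  refine ⟨fun hx => ⟨gi a * x, ?_⟩, fun hax => (h.isGroupInvOf_gi_s11.mul_mul_eq_of_dvd hax).symm⟩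
  rw [← mul_assoc, ← hx]

theorem IsGroupInvOf.mul_right_of_mul_eq (h : IsGroupInvOf x y) (hex : e * x = x) :
    IsGroupInvOf (x * e) (y * e) := by
  have hey : e * y = y := h.mul_eq_of_mul_eq hex
  have hxy : x * e * (y * e) = x * y * e := by
    rw [mul_assoc x, ← mul_assoc e, hey, mul_assoc]
  have hyx : y * e * (x * e) = y * x * e := by
    rw [mul_assoc y, ← mul_assoc e, hex, mul_assoc]
  obtain ⟨hxyx, hyxy, hcomm⟩ := h
  refine ⟨?_, ?_, ?_⟩
  · rw [hxy, mul_assoc _ e, ← mul_assoc e, hex, ← mul_assoc, hxyx]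
  · rw [hyx, mul_assoc _ e, ← mul_assoc e, hey, ← mul_assoc, hyxy]
  · rw [hxy, hyx, hcomm]

theorem IsGroupInvOf.mul_right_dvd_of_mul_eq (h : IsGroupInvOf x y) (hex : e * x = x) :
    x * e ∣ x := by
  refine ⟨y * x, ?_⟩
  rw [mul_assoc x, ← mul_assoc e, h.mul_eq_of_mul_eq hex, ← mul_assoc, h.1]

theorem IsGroupInvOf.of_mul_right_of_dvd (h : IsGroupInvOf (x * e) c) (hex : e * x = x)
    (hdvd : x * e ∣ x) : IsGroupInvOf x (c * c * x) := by
  have hec : e * c = c := h.mul_eq_of_mul_eq (by rw [← mul_assoc, hex])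
  have hcxx : c * x * x = x := by
    calc c * x * x = c * (x * e) * x := by rw [mul_assoc c (x * e), mul_assoc x, hex, mul_assoc]
      _ = x * e * c * x := by rw [h.2.2]
      _ = x := h.mul_mul_eq_of_dvd hdvd
  have hxcc : x * c * c = c := by
    calc x * c * c = x * e * c * c := by rw [mul_assoc x e, hec]
      _ = c * (x * e) * c := by rw [h.2.2]
      _ = c := h.2.1
  have hleft : x * (c * c * x) = c * x := by rw [← mul_assoc, ← mul_assoc, hxcc]
  have hright : c * c * x * x = c * x := by rw [mul_assoc c c, mul_assoc c, hcxx]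
  refine ⟨?_, ?_, ?_⟩
  · rw [hleft, hcxx]
  · rw [hright, mul_assoc c x, hleft, ← mul_assoc]
  · rw [hleft, hright]

theorem groupInvertible_iff_mul_right_of_mul_eq (hex : e * x = x) :
    GroupInvertible x ↔ GroupInvertible (x * e) ∧ x * e ∣ x :=
  ⟨fun ⟨_, hy⟩ => ⟨⟨_, hy.mul_right_of_mul_eq hex⟩, hy.mul_right_dvd_of_mul_eq hex⟩,
    fun ⟨⟨_, hc⟩, hdvd⟩ => ⟨_, hc.of_mul_right_of_dvd hex hdvd⟩⟩

end GroupInverse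

theorem group_inv_pbar_qbar_general {p : R} (hp : IsIdempotentElem p) (q : R) :
    GroupInvertible ((1 - p) * (1 - q)) ↔
      GroupInvertible ((1 - p) - (1 - p) * q * (1 - p)) ∧
        sp ((1 - p) - (1 - p) * q * (1 - p)) * ((1 - p) * q * p) = 0 := by
  have hfix : (1 - p) * ((1 - p) * (1 - q)) = (1 - p) * (1 - q) := by
    rw [← mul_assoc, hp.one_sub.eq]
  have hcorner : (1 - p) * (1 - q) * (1 - p) = (1 - p) - (1 - p) * q * (1 - p) := by
    rw [mul_one_sub (1 - p) q, sub_mul (1 - p), hp.one_sub.eq]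
  have hsplit : (1 - p) * (1 - q) =
      ((1 - p) - (1 - p) * q * (1 - p)) - (1 - p) * q * p := by
    noncomm_ring
  rw [groupInvertible_iff_mul_right_of_mul_eq hfix, hcorner]
  refine and_congr_right fun hb => ?_
  rw [hb.sp_mul_eq_zero_iff_dvd, hsplit, dvd_sub_right dvd_rfl]

theorem group_inv_pbar_qbar (p q q1 q2 q3 q4 : R) (hp : p * p = p) (hq : q * q = q)
    (h1 : q1 = p * q * p) (h2 : q2 = p * q * (1 - p))
    (h3 : q3 = (1 - p) * q * p) (h4 : q4 = (1 - p) * q * (1 - p)) :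
    GroupInvertible ((1 - p) * (1 - q)) ↔
      GroupInvertible ((1 - p) - q4) ∧ sp ((1 - p) - q4) * q3 = 0 := by
  subst h3 h4
  exact group_inv_pbar_qbar_general hp q
end
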